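/- Let Ξ be a nonempty compact subset of ℝ^d, let Q : Ξ → ℝ be bounded and upper semicontinuous, let ψ_1, …, ψ_m : Ξ → ℝ be bounded and lower semicontinuous, let γ_1, …, γ_m ∈ ℝ, and let 𝒫 be the associated ambiguity set. Assume there exists Δ > 0 such that for every t ∈ [0, Δ] the set { P : ∫_Ξ ψ_i dP ≤ γ_i − t for all i } is nonempty, and assume the function g(t) = sup { ∫_Ξ Q dP : ∫_Ξ ψ_i dP ≤ γ_i − t for all i } is continuous at t = 0. Then sup_{P ∈ 𝒫} ∫_Ξ Q dP equals the supremum of ∑_{j=1}^n p_j Q(ξ_j) over all n ≥ 1, all ξ_1, …, ξ_n ∈ Ξ, and all p_1, …, p_n ≥ 0 with ∑_j p_j = 1 and ∑_j p_j ψ_i(ξ_j) ≤ γ_i for every i; i.e. the worst-case expected value over 𝒫 equals the worst-case expected value over the finitely supported members of 𝒫. -/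

import Mathlib

open MeasureTheory Filter

/-!
In a finite-dimensional space the barycenter of a probability measure carried by a convex set `s`
lies in `s` itself, not only in its closure: otherwise a nonzero functional attains its maximum over
`s` at the barycenter, hence is almost surely constant, and one descends to its kernel. Applied to
the convex hull of the image of `Ξ` under `x ↦ (Q x, (ψ i x)ᵢ)`, this turns every member of the
ambiguity set into a finitely supported one with the same moments and the same expected value.
So the two suprema are taken over the same set of values.
-/

section Barycenter

variable {α E : Type*} [MeasurableSpace α] {P : Measure α}
  [NormedAddCommGroup E] [NormedSpace ℝ E]

theorem ae_dual_eq_zero_of_integral_eq_zero [CompleteSpace E] {f : α → E}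
    (hf : Integrable f P) (hf0 : ∫ a, f a ∂P = 0) (l : StrongDual ℝ E)
    (hl : ∀ᵐ a ∂P, l (f a) ≤ 0) : ∀ᵐ a ∂P, l (f a) = 0 := by
  have hzero : ∫ a, -l (f a) ∂P = 0 := by
    rw [integral_neg, l.integral_comp_comm hf, hf0, map_zero, neg_zero]
  have hnonneg : 0 ≤ᵐ[P] fun a => -l (f a) := hl.mono fun a ha => neg_nonneg.2 ha
  filter_upwards [(integral_eq_zero_iff_of_nonneg_ae hnonneg (l.integrable_comp hf).neg).1 hzero]
    with a ha
  exact neg_eq_zero.1 ha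

variable [FiniteDimensional ℝ E]

theorem exists_dual_forall_le_of_notMem_convex {s : Set E} (hs : Convex ℝ s) (hne : s.Nonempty)
    {x : E} (hx : x ∉ s) : ∃ l : StrongDual ℝ E, l ≠ 0 ∧ ∀ y ∈ s, l y ≤ l x := by
  by_cases hsint : (interior s).Nonempty
  · exact geometric_hahn_banach_of_nonempty_interior_point hs
      (fun h => hx (interior_subset h)) hsint
  -- `s` lies in a hyperplane, so some nonzero functional is constant on `s`.
  have hspan : (affineSpan ℝ s).direction < ⊤ := by
    refine lt_top_iff_ne_top.2 fun h => hsint (hs.interior_nonempty_iff_affineSpan_eq_top.2 ?_)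
    exact (AffineSubspace.direction_eq_top_iff_of_nonempty (hne.mono (subset_affineSpan ℝ s))).1 h
  obtain ⟨l, hl, hker⟩ := Submodule.exists_le_ker_of_lt_top _ hspan
  obtain ⟨y₀, hy₀⟩ := hne
  have hconst : ∀ y ∈ s, l y = l y₀ := fun y hy => by
    have : l (y - y₀) = 0 := hker <|
      AffineSubspace.vsub_mem_direction (subset_affineSpan ℝ s hy) (subset_affineSpan ℝ s hy₀)
    rwa [map_sub, sub_eq_zero] at this
  have hl' : l.toContinuousLinearMap ≠ 0 := by simpa using hl
  rcases le_total (l y₀) (l x) with h | h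
  · exact ⟨l.toContinuousLinearMap, hl', fun y hy => (hconst y hy).trans_le h⟩
  · exact ⟨-l.toContinuousLinearMap, neg_ne_zero.2 hl',
      fun y hy => neg_le_neg (h.trans_eq (hconst y hy).symm)⟩

theorem zero_mem_of_integral_eq_zero_of_ae_mem_convex [IsProbabilityMeasure P] {s : Set E}
    (hs : Convex ℝ s) {f : α → E} (hf : Integrable f P) (hfs : ∀ᵐ a ∂P, f a ∈ s)
    (hf0 : ∫ a, f a ∂P = 0) : (0 : E) ∈ s := by
  induction hn : Module.finrank ℝ E using Nat.strong_induction_on generalizing E with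
  | _ n ih =>
  subst hn
  by_contra h0
  obtain ⟨a₀, ha₀⟩ := hfs.exists
  obtain ⟨l, hl, hle⟩ := exists_dual_forall_le_of_notMem_convex hs ⟨f a₀, ha₀⟩ h0
  have hker : ∀ᵐ a ∂P, f a ∈ l.ker :=
    ae_dual_eq_zero_of_integral_eq_zero hf hf0 l (hfs.mono fun a ha => by simpa using hle _ ha)
  obtain ⟨π, hπ⟩ := Submodule.ClosedComplemented.of_finiteDimensional l.ker
  have hlt : Module.finrank ℝ l.ker < Module.finrank ℝ E :=
    Submodule.finrank_lt fun h => hl (ContinuousLinearMap.coe_injective (LinearMap.ker_eq_top.1 h))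
  refine h0 (ih _ hlt (s := l.ker.subtype ⁻¹' s) (hs.linear_preimage l.ker.subtype)
    (f := fun a => π (f a)) (π.integrable_comp hf) ?_ ?_ rfl)
  · filter_upwards [hfs, hker] with a has hak
    rw [Set.mem_preimage, hπ ⟨f a, hak⟩]
    exact has
  · rw [π.integral_comp_comm hf, hf0, map_zero]

theorem integral_mem_of_ae_mem_convex [IsProbabilityMeasure P] {s : Set E} (hs : Convex ℝ s)
    {f : α → E} (hf : Integrable f P) (hfs : ∀ᵐ a ∂P, f a ∈ s) : ∫ a, f a ∂P ∈ s := by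
  set b := ∫ a, f a ∂P
  have hzero : ∫ a, (f a - b) ∂P = 0 := by
    rw [integral_sub hf (integrable_const b), integral_const, probReal_univ, one_smul, sub_self]
  simpa using zero_mem_of_integral_eq_zero_of_ae_mem_convex (hs.translate_preimage_right b)
    (hf.sub (integrable_const b)) (by simpa using hfs) hzero

theorem exists_fin_sum_smul_eq_integral [IsProbabilityMeasure P] {s : Set α}
    (hs : ∀ᵐ a ∂P, a ∈ s) {f : α → E} (hf : Integrable f P) :
    ∃ (n : ℕ) (x : Fin n → α) (p : Fin n → ℝ), (∀ j, x j ∈ s) ∧ (∀ j, 0 ≤ p j) ∧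
      ∑ j, p j = 1 ∧ ∑ j, p j • f (x j) = ∫ a, f a ∂P := by
  have hmem : ∫ a, f a ∂P ∈ convexHull ℝ (f '' s) :=
    integral_mem_of_ae_mem_convex (convex_convexHull ℝ _) hf
      (hs.mono fun a ha => subset_convexHull ℝ _ (Set.mem_image_of_mem f ha))
  obtain ⟨ι, _, w, z, hw, hw1, hz, hsum⟩ := mem_convexHull_iff_exists_fintype.1 hmem
  choose y hys hyz using hz
  let e := (Fintype.equivFin ι).symm
  refine ⟨_, y ∘ e, w ∘ e, fun j => hys _, fun j => hw _, (e.sum_comp w).trans hw1, ?_⟩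
  simp only [Function.comp_apply, hyz]
  exact (e.sum_comp fun i => w i • z i).trans hsum

end Barycenter

section DiscreteMeasure

variable {α ι : Type*} [MeasurableSpace α] [Fintype ι]

/-- The measure with mass `p j` at `x j`. Negative weights are truncated to `0`. -/
noncomputable def discreteMeasure (p : ι → ℝ) (x : ι → α) : Measure α :=
  ∑ j, ENNReal.ofReal (p j) • Measure.dirac (x j)

theorem isProbabilityMeasure_discreteMeasure {p : ι → ℝ} (hp : ∀ j, 0 ≤ p j)
    (hsum : ∑ j, p j = 1) (x : ι → α) : IsProbabilityMeasure (discreteMeasure p x) := by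
  refine ⟨?_⟩
  simp [discreteMeasure, ← ENNReal.ofReal_sum_of_nonneg fun j _ => hp j, hsum]

variable [MeasurableSingletonClass α]

theorem discreteMeasure_compl_eq_zero (p : ι → ℝ) {x : ι → α} {s : Set α} (hx : ∀ j, x j ∈ s) :
    discreteMeasure p x sᶜ = 0 := by
  simp [discreteMeasure, hx]

theorem integral_discreteMeasure {E : Type*} [NormedAddCommGroup E] [NormedSpace ℝ E]
    [CompleteSpace E] {p : ι → ℝ} (hp : ∀ j, 0 ≤ p j) (x : ι → α) (f : α → E) :
    ∫ a, f a ∂discreteMeasure p x = ∑ j, p j • f (x j) := by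
  rw [discreteMeasure, integral_finsetSum_measure fun j _ =>
    (integrable_dirac (by simp)).smul_measure ENNReal.ofReal_ne_top]
  exact Finset.sum_congr rfl fun j _ => by
    rw [integral_smul_measure, integral_dirac, ENNReal.toReal_ofReal (hp j)]

end DiscreteMeasure

theorem integrable_of_measurable_domRestrict_of_norm_le {α E : Type*} [MeasurableSpace α]
    [NormedAddCommGroup E] [MeasurableSpace E] [OpensMeasurableSpace E] [SecondCountableTopology E]
    {P : Measure α} [IsFiniteMeasure P] {s : Set α} (hs : MeasurableSet s)
    (hPs : ∀ᵐ a ∂P, a ∈ s) {f : α → E} (hf : Measurable (s.domRestrict f))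
    (hb : ∃ C, ∀ a ∈ s, ‖f a‖ ≤ C) : Integrable f P := by
  obtain ⟨C, hC⟩ := hb
  have hfm : AEMeasurable f (P.restrict s) := aemeasurable_restrict_of_measurable_subtype hs hf
  rw [Measure.restrict_eq_self_of_ae_mem hPs] at hfm
  exact Integrable.of_bound hfm.aestronglyMeasurable C (hPs.mono hC)

/-- The ambiguity set `𝒫` of the probability measures carried by `Ξ` that satisfy the moment
constraints `∫ ψ i ≤ γ i`. The Bochner integral of a nonintegrable function being `0`, membership
is meaningful only for measures that integrate every `ψ i`. -/
def ambiguitySet {α ι : Type*} [MeasurableSpace α] (Ξ : Set α) (ψ : ι → α → ℝ) (γ : ι → ℝ) :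
    Set (Measure α) :=
  {P | IsProbabilityMeasure P ∧ P Ξᶜ = 0 ∧ ∀ i, ∫ x, ψ i x ∂P ≤ γ i}

theorem WCEV_eq_discrete_WCEV_general {α ι : Type*} [MeasurableSpace α]
    [MeasurableSingletonClass α] [Finite ι] {Ξ : Set α} {Q : α → ℝ} {ψ : ι → α → ℝ} {γ : ι → ℝ}
    (hQ : ∀ P ∈ ambiguitySet Ξ ψ γ, Integrable Q P)
    (hψ : ∀ P ∈ ambiguitySet Ξ ψ γ, ∀ i, Integrable (ψ i) P) :
    {r : ℝ | ∃ P, P ∈ ambiguitySet Ξ ψ γ ∧ ∫ x, Q x ∂P = r} =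
      {r : ℝ | ∃ (n : ℕ) (ξ : Fin n → α) (p : Fin n → ℝ),
        (∀ j, ξ j ∈ Ξ) ∧ (∀ j, 0 ≤ p j) ∧ (∑ j, p j = 1) ∧
        (∀ i, ∑ j, p j * ψ i (ξ j) ≤ γ i) ∧
        (∑ j, p j * Q (ξ j)) = r} := by
  have := Fintype.ofFinite ι
  ext r
  constructor
  · rintro ⟨P, hP, rfl⟩
    have ⟨_, hPΞ, hPγ⟩ := hP
    have hψP : Integrable (fun x i => ψ i x) P := Integrable.of_eval (hψ P hP)
    obtain ⟨n, ξ, p, hξ, hp, hp1, hsum⟩ :=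
      exists_fin_sum_smul_eq_integral hPΞ ((hQ P hP).prodMk hψP)
    rw [integral_pair (hQ P hP) hψP, Prod.ext_iff, funext_iff] at hsum
    obtain ⟨hsumQ, hsumψ⟩ := hsum
    simp only [Prod.fst_sum, Prod.snd_sum, Finset.sum_apply, Prod.smul_fst, Prod.smul_snd,
      Pi.smul_apply, smul_eq_mul, eval_integral (hψ P hP)] at hsumQ hsumψ
    exact ⟨n, ξ, p, hξ, hp, hp1, fun i => (hsumψ i).trans_le (hPγ i), hsumQ⟩
  · rintro ⟨n, ξ, p, hξ, hp, hp1, hγ, rfl⟩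
    exact ⟨discreteMeasure p ξ, ⟨isProbabilityMeasure_discreteMeasure hp hp1 ξ,
      discreteMeasure_compl_eq_zero p hξ,
      fun i => (integral_discreteMeasure hp ξ (ψ i)).trans_le (hγ i)⟩,
      integral_discreteMeasure hp ξ Q⟩

/-- Under the hypotheses of Theorem 2 (Slater-type condition and
continuity of the perturbed value function `g` at `0`), the worst-case expected value
over the ambiguity set equals the supremum of the worst-case expected values over its
finitely supported members. -/
theorem WCEV_eq_discrete_WCEV
    (d m : ℕ) (Ξ : Set (EuclideanSpace ℝ (Fin d)))
    (hΞne : Ξ.Nonempty) (hΞc : IsCompact Ξ)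
    (Q : EuclideanSpace ℝ (Fin d) → ℝ)
    (hQu : UpperSemicontinuousOn Q Ξ) (hQb : ∃ C, ∀ x ∈ Ξ, |Q x| ≤ C)
    (ψ : Fin m → EuclideanSpace ℝ (Fin d) → ℝ)
    (hψl : ∀ i, LowerSemicontinuousOn (ψ i) Ξ)
    (hψb : ∀ i, ∃ C, ∀ x ∈ Ξ, |ψ i x| ≤ C)
    (γ : Fin m → ℝ)
    (hSlater : ∃ Δ : ℝ, 0 < Δ ∧ ∀ t ∈ Set.Icc (0 : ℝ) Δ,
      ∃ P : Measure (EuclideanSpace ℝ (Fin d)),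
        IsProbabilityMeasure P ∧ P Ξᶜ = 0 ∧ ∀ i, ∫ x, ψ i x ∂P ≤ γ i - t)
    (hg : ContinuousAt (fun t : ℝ =>
      sSup {r : ℝ | ∃ P : Measure (EuclideanSpace ℝ (Fin d)),
        (IsProbabilityMeasure P ∧ P Ξᶜ = 0 ∧ ∀ i, ∫ x, ψ i x ∂P ≤ γ i - t) ∧
        (∫ x, Q x ∂P) = r}) 0) :
    sSup {r : ℝ | ∃ P : Measure (EuclideanSpace ℝ (Fin d)),
        (IsProbabilityMeasure P ∧ P Ξᶜ = 0 ∧ ∀ i, ∫ x, ψ i x ∂P ≤ γ i) ∧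
        (∫ x, Q x ∂P) = r} =
      sSup {r : ℝ | ∃ (n : ℕ) (ξ : Fin n → EuclideanSpace ℝ (Fin d)) (p : Fin n → ℝ),
        (∀ j, ξ j ∈ Ξ) ∧ (∀ j, 0 ≤ p j) ∧ (∑ j, p j = 1) ∧
        (∀ i, ∑ j, p j * ψ i (ξ j) ≤ γ i) ∧
        (∑ j, p j * Q (ξ j)) = r} := by
  refine congrArg sSup (WCEV_eq_discrete_WCEV_general ?_ ?_)
  · rintro P ⟨_, hP, -⟩
    exact integrable_of_measurable_domRestrict_of_norm_le hΞc.measurableSet hP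
      (upperSemicontinuousOn_iff_restrict.2 hQu).measurable hQb
  · rintro P ⟨_, hP, -⟩ i
    exact integrable_of_measurable_domRestrict_of_norm_le hΞc.measurableSet hP
      (lowerSemicontinuous_restrict_iff.2 (hψl i)).measurable (hψb i)
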